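/- arXiv:2303.16979 — 2 statements merged into one kernel-verified Lean document; each statement's English description precedes it below -/
import Mathlib

section
/- Let n ≥ 1, ⋆ ∈ {+,−}^n, i ∈ {1,…,n}, and t ∈ [−1,1]^n with t_i = 1. Then the closed box of β^⋆_n(t) equals [1/2,1] times the product whose i-th factor is J(⋆_i) and whose j-th factor (j ≠ i) is [σ_{⋆_j}(t_j), −σ_{−⋆_j}(t_j)]; every open box indexed by ⋆' with ⋆'_i = −⋆_i equals [0,1]×∏_{j=1}^n J(⋆'_j) (the corresponding box of μ_n); and every open box indexed by ⋆' with ⋆'_i = ⋆_i equals [0, τ_{(⋆⋆')|_{j≠i}}((t_j)_{j≠i})]×∏_{j=1}^n J(⋆'_j). Equivalently, β^⋆_n(t) is the configuration obtained from ι_{{1,…,n}∖{i}}(μ_1) by open-type substitution of ι_{{i}}(μ_{n−1}) into its open box of sign −⋆_i and of ι_{{i}}(β^{(⋆_j)_{j≠i}}_{n−1}((t_j)_{j≠i})) into its open box of sign ⋆_i. (This is the facet identity d^+_i β^⋆_n = μ ∘ (μ, β) used in the proof that the chain η_n is closed.) -/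
/-- `J(+) = [0,1]`, `J(-) = [-1,0]`: lower endpoint (`true` is `+`, `false` is `-`). -/
def jLo (b : Bool) : ℝ := if b then 0 else -1

/-- `J(+) = [0,1]`, `J(-) = [-1,0]`: upper endpoint. -/
def jHi (b : Bool) : ℝ := if b then 1 else 0

/-- `σ_+(u) = min(0,u)` and `σ_-(u) = -1`. -/
noncomputable def sigmaF (b : Bool) (u : ℝ) : ℝ := if b then min 0 u else -1

/-- `τ_⋆(t) = max ({1/2} ∪ {(1 + t i)/2 : ⋆_i = -})`. -/
noncomputable def tauF {k : ℕ} (s : Fin k → Bool) (t : Fin k → ℝ) : ℝ :=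
  Finset.fold max (1/2) (fun i => if s i then (1/2 : ℝ) else (1 + t i) / 2) Finset.univ

/-- Lower endpoint vectors of the boxes of the configuration `β^s_k(t)`:
the closed box (index `none`) is `[1/2,1] × ∏_{i=1}^k [σ_{s i}(t i), -σ_{-(s i)}(t i)]`, and
the open box indexed by `some s'` is `[0, τ_{s·s'}(t)] × ∏_{i=1}^k J(s' i)`. -/
noncomputable def betaLo {k : ℕ} (s : Fin k → Bool) (t : Fin k → ℝ) :
    Option (Fin k → Bool) → Fin (k+1) → ℝ
  | none => Fin.cons (1/2) fun i => sigmaF (s i) (t i)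
  | some s' => Fin.cons 0 fun i => jLo (s' i)

/-- Upper endpoint vectors of the boxes of the configuration `β^s_k(t)`. -/
noncomputable def betaHi {k : ℕ} (s : Fin k → Bool) (t : Fin k → ℝ) :
    Option (Fin k → Bool) → Fin (k+1) → ℝ
  | none => Fin.cons 1 fun i => -sigmaF (!(s i)) (t i)
  | some s' => Fin.cons (tauF (fun i => s i == s' i) t) fun i => jHi (s' i)

/-- Lower endpoint vector of the box of `μ_k` indexed by the sign vector `s`. -/
def muLo {k : ℕ} (s : Fin k → Bool) : Fin (k+1) → ℝ := Fin.cons 0 fun i => jLo (s i)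

/-- Upper endpoint vector of the box of `μ_k` indexed by the sign vector `s`. -/
def muHi {k : ℕ} (s : Fin k → Bool) : Fin (k+1) → ℝ := Fin.cons 1 fun i => jHi (s i)

/-- The map `ψ_o` associated to an open-type box `o` recorded by its endpoint vectors. -/
noncomputable def psiV {n : ℕ} (lo hi : Fin (n+1) → ℝ) (x : Fin (n+1) → ℝ) :
    Fin (n+1) → ℝ :=
  Fin.cons (hi 0 * x 0) fun i =>
    lo i.succ + (hi i.succ - lo i.succ) * (x i.succ + 1) / 2

/-!
An open-type substitution into the box of sign `b` of `ι_{{1,…,n}∖{i}}(μ_1)` rescales only the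
`i`-th coordinate, sending `[-1,1]` onto `J(b)`.  When `t_i = 1` the `i`-th factor of the closed box
of `β^s_n(t)` is `J(s_i)`, and the height `τ_{s·s'}(t)` depends on `s'_i` as follows: if
`s'_i = -s_i`, then `i` contributes `(1 + t_i)/2 = 1`, the largest possible value, so the height is
that of `μ_n`; if `s'_i = s_i`, then `i` contributes nothing, so the height is that of `β_{n-1}`.
-/

theorem comp_insertNth {α β : Type*} {k : ℕ} (f : α → β) (i : Fin (k + 1)) (a : α)
    (x : Fin k → α) : f ∘ i.insertNth a x = i.insertNth (f a) (f ∘ x) :=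
  Fin.eq_insertNth_iff.mpr ⟨by simp, funext fun j => by simp [Fin.removeNth]⟩

theorem sigmaF_one (b : Bool) : sigmaF b 1 = jLo b := by
  cases b <;> simp [sigmaF, jLo]

theorem neg_sigmaF_not_one (b : Bool) : -sigmaF (!b) 1 = jHi b := by
  cases b <;> simp [sigmaF, jHi]

theorem jHi_sub_jLo (b : Bool) : jHi b - jLo b = 1 := by
  cases b <;> simp [jHi, jLo]

section Tau

variable {k : ℕ}

theorem half_le_tauF (s : Fin k → Bool) (t : Fin k → ℝ) : 1 / 2 ≤ tauF s t :=
  (Finset.le_fold_max _).mpr (Or.inl le_rfl)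

theorem tauF_le_one (s : Fin k → Bool) {t : Fin k → ℝ} (ht : ∀ j, t j ≤ 1) : tauF s t ≤ 1 := by
  refine (Finset.fold_max_le _).mpr ⟨by norm_num, fun j _ => ?_⟩
  split_ifs
  · norm_num
  · linarith [ht j]

theorem le_tauF {s : Fin k → Bool} (t : Fin k → ℝ) {i : Fin k} (hs : s i = false) :
    (1 + t i) / 2 ≤ tauF s t :=
  (Finset.le_fold_max _).mpr (Or.inr ⟨i, Finset.mem_univ i, by simp [hs]⟩)

theorem tauF_eq_one {s : Fin k → Bool} {t : Fin k → ℝ} {i : Fin k} (ht : ∀ j, t j ≤ 1)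
    (hti : t i = 1) (hs : s i = false) : tauF s t = 1 :=
  le_antisymm (tauF_le_one s ht) (by linarith [le_tauF t hs])

theorem tauF_eq_max_removeNth (i : Fin (k + 1)) (s : Fin (k + 1) → Bool) (t : Fin (k + 1) → ℝ) :
    tauF s t =
      max (if s i then 1 / 2 else (1 + t i) / 2) (tauF (i.removeNth s) (i.removeNth t)) := by
  unfold tauF
  rw [Fin.univ_succAbove k i, Finset.fold_cons, Finset.fold_map]
  rfl

theorem tauF_eq_tauF_removeNth {i : Fin (k + 1)} {s : Fin (k + 1) → Bool} (t : Fin (k + 1) → ℝ)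
    (hs : s i = true) : tauF s t = tauF (i.removeNth s) (i.removeNth t) := by
  rw [tauF_eq_max_removeNth i, if_pos hs, max_eq_right (half_le_tauF _ _)]

end Tau

section Facet

variable {k : ℕ} {s s' : Fin k → Bool} {t : Fin k → ℝ} {i : Fin k}

theorem betaLo_none_of_eq_one (hti : t i = 1) :
    betaLo s t none =
      Fin.cons (1 / 2) fun j => if j = i then jLo (s i) else sigmaF (s j) (t j) := by
  refine congrArg (Fin.cons (1 / 2)) (funext fun j => ?_)
  split_ifs with h
  · rw [h, hti, sigmaF_one]
  · rfl

theorem betaHi_none_of_eq_one (hti : t i = 1) :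
    betaHi s t none =
      Fin.cons 1 fun j => if j = i then jHi (s i) else -sigmaF (!(s j)) (t j) := by
  refine congrArg (Fin.cons 1) (funext fun j => ?_)
  split_ifs with h
  · rw [h, hti, neg_sigmaF_not_one]
  · rfl

theorem betaHi_some_eq_muHi (ht : ∀ j, t j ≤ 1) (hti : t i = 1) (hs : s' i = !(s i)) :
    betaHi s t (some s') = muHi s' := by
  have hτ : tauF (fun j => s j == s' j) t = 1 := tauF_eq_one ht hti (by simp [hs])
  simp only [betaHi, muHi, hτ]

theorem betaHi_some_of_eq {m : ℕ} {i : Fin (m + 1)} {s s' : Fin (m + 1) → Bool}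
    (t : Fin (m + 1) → ℝ) (hs : s' i = s i) :
    betaHi s t (some s') =
      Fin.cons (tauF (i.removeNth fun j => s j == s' j) (i.removeNth t)) fun j => jHi (s' j) := by
  have hτ := tauF_eq_tauF_removeNth (s := fun j => s j == s' j) t (beq_iff_eq.mpr hs.symm)
  simp only [betaHi, hτ]

end Facet

section Substitution

variable {m : ℕ} (i : Fin (m + 1))

/-- Lower endpoint vector of the open box of sign `b` of `ι_{{1,…,n}∖{i}}(μ_1)`, where `i : Fin n`
denotes the tail coordinate `i.succ`. -/
def slabLo (b : Bool) : Fin (m + 2) → ℝ := Fin.cons 0 fun j => if j = i then jLo b else -1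

/-- Upper endpoint vector of the open box of sign `b` of `ι_{{1,…,n}∖{i}}(μ_1)`. -/
def slabHi (b : Bool) : Fin (m + 2) → ℝ := Fin.cons 1 fun j => if j = i then jHi b else 1

theorem psiV_slab_insertNth (b : Bool) (e : ℝ) (x : Fin (m + 1) → ℝ) :
    psiV (slabLo i b) (slabHi i b) (i.succ.insertNth e x) =
      i.succ.insertNth (jLo b + (e + 1) / 2) x := by
  cases x using Fin.consCases with
  | _ a y =>
    simp only [Fin.insertNth_succ_cons]
    refine congrArg₂ Fin.cons (one_mul a) (Fin.eq_insertNth_iff.mpr ⟨?_, funext fun j => ?_⟩)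
    · simp [slabLo, slabHi, jHi_sub_jLo]
    · simp only [Fin.removeNth, slabLo, slabHi, Fin.cons_succ, Fin.insertNth_apply_succAbove,
        Fin.succAbove_ne, if_false]
      ring

/- `ι_{{i}}` inserts the interval `[-1,1]` at coordinate `i`, so it is `i.succ.insertNth (-1)` on
lower and `i.succ.insertNth 1` on upper endpoint vectors. -/
theorem psiV_slab_insertNth_neg_one (b : Bool) (x : Fin (m + 1) → ℝ) :
    psiV (slabLo i b) (slabHi i b) (i.succ.insertNth (-1) x) = i.succ.insertNth (jLo b) x := by
  rw [psiV_slab_insertNth, neg_add_cancel, zero_div, add_zero]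

theorem psiV_slab_insertNth_one (b : Bool) (x : Fin (m + 1) → ℝ) :
    psiV (slabLo i b) (slabHi i b) (i.succ.insertNth 1 x) = i.succ.insertNth (jHi b) x := by
  rw [psiV_slab_insertNth, one_add_one_eq_two, div_self two_ne_zero, ← jHi_sub_jLo b,
    add_sub_cancel]

theorem muLo_insertNth (b : Bool) (s : Fin m → Bool) :
    muLo (i.insertNth b s) = i.succ.insertNth (jLo b) (muLo s) := by
  simp only [muLo, Fin.insertNth_succ_cons]
  exact congrArg (Fin.cons 0) (comp_insertNth jLo i b s)

theorem muHi_insertNth (b : Bool) (s : Fin m → Bool) :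
    muHi (i.insertNth b s) = i.succ.insertNth (jHi b) (muHi s) := by
  simp only [muHi, Fin.insertNth_succ_cons]
  exact congrArg (Fin.cons 1) (comp_insertNth jHi i b s)

theorem betaHi_some_insertNth (s : Fin (m + 1) → Bool) (t : Fin (m + 1) → ℝ) (s' : Fin m → Bool) :
    betaHi s t (some (i.insertNth (s i) s')) =
      i.succ.insertNth (jHi (s i)) (betaHi (i.removeNth s) (i.removeNth t) (some s')) := by
  have hs : (i.removeNth fun j => s j == (i.insertNth (s i) s' : Fin (m + 1) → Bool) j) =
      fun j => i.removeNth s j == s' j :=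
    funext fun j => by simp [Fin.removeNth]
  rw [betaHi_some_of_eq (i := i) t (by simp), hs]
  simp only [betaHi, Fin.insertNth_succ_cons]
  exact congrArg (Fin.cons _) (comp_insertNth jHi i (s i) s')

variable {i} {s : Fin (m + 1) → Bool} {t : Fin (m + 1) → ℝ}

theorem betaLo_map_insertNth (hti : t i = 1) (c : Option (Fin m → Bool)) :
    betaLo s t (c.map (i.insertNth (s i))) =
      i.succ.insertNth (jLo (s i)) (betaLo (i.removeNth s) (i.removeNth t) c) := by
  cases c with
  | none =>
    simp only [Option.map_none, betaLo, Fin.insertNth_succ_cons]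
    refine congrArg (Fin.cons (1 / 2)) (Fin.eq_insertNth_iff.mpr ⟨?_, rfl⟩)
    rw [hti, sigmaF_one]
  | some s' => exact muLo_insertNth i (s i) s'

theorem betaHi_map_insertNth (hti : t i = 1) (c : Option (Fin m → Bool)) :
    betaHi s t (c.map (i.insertNth (s i))) =
      i.succ.insertNth (jHi (s i)) (betaHi (i.removeNth s) (i.removeNth t) c) := by
  cases c with
  | none =>
    simp only [Option.map_none, betaHi, Fin.insertNth_succ_cons]
    refine congrArg (Fin.cons 1) (Fin.eq_insertNth_iff.mpr ⟨?_, rfl⟩)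
    rw [hti, neg_sigmaF_not_one]
  | some s' => exact betaHi_some_insertNth i s t s'

theorem psiV_slab_muLo (b : Bool) (s : Fin m → Bool) :
    psiV (slabLo i b) (slabHi i b) (i.succ.insertNth (-1) (muLo s)) = muLo (i.insertNth b s) := by
  rw [psiV_slab_insertNth_neg_one, muLo_insertNth]

theorem psiV_slab_muHi (b : Bool) (s : Fin m → Bool) :
    psiV (slabLo i b) (slabHi i b) (i.succ.insertNth 1 (muHi s)) = muHi (i.insertNth b s) := by
  rw [psiV_slab_insertNth_one, muHi_insertNth]

theorem psiV_slab_betaLo (hti : t i = 1) (c : Option (Fin m → Bool)) :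
    psiV (slabLo i (s i)) (slabHi i (s i))
        (i.succ.insertNth (-1) (betaLo (i.removeNth s) (i.removeNth t) c)) =
      betaLo s t (c.map (i.insertNth (s i))) := by
  rw [psiV_slab_insertNth_neg_one, betaLo_map_insertNth hti]

theorem psiV_slab_betaHi (hti : t i = 1) (c : Option (Fin m → Bool)) :
    psiV (slabLo i (s i)) (slabHi i (s i))
        (i.succ.insertNth 1 (betaHi (i.removeNth s) (i.removeNth t) c)) =
      betaHi s t (c.map (i.insertNth (s i))) := by
  rw [psiV_slab_insertNth_one, betaHi_map_insertNth hti]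

end Substitution

/-- The facet `t_i = 1` of `β^s_n` (here `n = m + 1`; tail coordinates
`1, …, n` of `ℝ^{n+1}` are identified with `Fin (m+1)`, so `i : Fin (m+1)` denotes the
coordinate `i + 1`).  The closed box is `[1/2,1]` times the product with `i`-th factor
`J(s i)` and `j`-th factor `[σ_{s j}(t j), -σ_{-(s j)}(t j)]` for `j ≠ i`; every open box
indexed by `s'` with `s'_i = -s_i` is the corresponding box of `μ_n`; and every open box
indexed by `s'` with `s'_i = s_i` is `[0, τ_{(s·s')|_{j≠i}}((t_j)_{j≠i})] × ∏ J(s' j)`.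
Equivalently, `β^s_n(t)` is obtained from `ι_{{1,…,n}∖{i}}(μ_1)` by open-type substitution
of `ι_{{i}}(μ_{n-1})` into its open box of sign `-s_i` and of
`ι_{{i}}(β^{s∖i}_{n-1}((t_j)_{j≠i}))` into its open box of sign `s_i`. -/
theorem stmt8 (m : ℕ) (s : Fin (m+1) → Bool) (i : Fin (m+1)) (t : Fin (m+1) → ℝ)
    (ht : ∀ j, t j ∈ Set.Icc (-1 : ℝ) 1) (hti : t i = 1) :
    -- explicit description of the facet
    (betaLo s t none =
        Fin.cons (1/2) (fun j => if j = i then jLo (s i) else sigmaF (s j) (t j)) ∧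
     betaHi s t none =
        Fin.cons 1 (fun j => if j = i then jHi (s i) else -sigmaF (!(s j)) (t j)) ∧
     (∀ s' : Fin (m+1) → Bool, s' i = !(s i) →
        betaLo s t (some s') = muLo s' ∧ betaHi s t (some s') = muHi s') ∧
     (∀ s' : Fin (m+1) → Bool, s' i = s i →
        betaLo s t (some s') = Fin.cons 0 (fun j => jLo (s' j)) ∧
        betaHi s t (some s') =
          Fin.cons (tauF (i.removeNth fun j => s j == s' j) (i.removeNth t))
            (fun j => jHi (s' j)))) ∧
    -- substitution description
    (∀ s'' : Fin m → Bool,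
      -- the box of ι_{{i}}(μ_{n-1}) indexed by s'', substituted into the open box of
      -- ι_{{1,…,n}∖{i}}(μ_1) of sign -s_i
      (psiV
          (Fin.cons 0 fun j => if j = i then jLo (!(s i)) else -1)
          (Fin.cons 1 fun j => if j = i then jHi (!(s i)) else 1)
          (Fin.cons 0 (i.insertNth (-1) fun j => jLo (s'' j)))
          = betaLo s t (some (i.insertNth (!(s i)) s'')) ∧
       psiV
          (Fin.cons 0 fun j => if j = i then jLo (!(s i)) else -1)
          (Fin.cons 1 fun j => if j = i then jHi (!(s i)) else 1)
          (Fin.cons 1 (i.insertNth 1 fun j => jHi (s'' j)))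
          = betaHi s t (some (i.insertNth (!(s i)) s''))) ∧
      -- the open box of ι_{{i}}(β_{n-1}) indexed by s'', substituted into the open box of
      -- ι_{{1,…,n}∖{i}}(μ_1) of sign s_i
      (psiV
          (Fin.cons 0 fun j => if j = i then jLo (s i) else -1)
          (Fin.cons 1 fun j => if j = i then jHi (s i) else 1)
          (Fin.cons 0 (i.insertNth (-1) fun j => jLo (s'' j)))
          = betaLo s t (some (i.insertNth (s i) s'')) ∧
       psiV
          (Fin.cons 0 fun j => if j = i then jLo (s i) else -1)
          (Fin.cons 1 fun j => if j = i then jHi (s i) else 1)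
          (Fin.cons (tauF (fun j => i.removeNth s j == s'' j) (i.removeNth t))
            (i.insertNth 1 fun j => jHi (s'' j)))
          = betaHi s t (some (i.insertNth (s i) s''))) ∧
      -- the closed box of ι_{{i}}(β_{n-1}), substituted into the open box of
      -- ι_{{1,…,n}∖{i}}(μ_1) of sign s_i
      (psiV
          (Fin.cons 0 fun j => if j = i then jLo (s i) else -1)
          (Fin.cons 1 fun j => if j = i then jHi (s i) else 1)
          (Fin.cons (1/2)
            (i.insertNth (-1) fun j => sigmaF (i.removeNth s j) (i.removeNth t j)))
          = betaLo s t none ∧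
       psiV
          (Fin.cons 0 fun j => if j = i then jLo (s i) else -1)
          (Fin.cons 1 fun j => if j = i then jHi (s i) else 1)
          (Fin.cons 1
            (i.insertNth 1 fun j => -sigmaF (!(i.removeNth s j)) (i.removeNth t j)))
          = betaHi s t none)) := by
  have ht' : ∀ j, t j ≤ 1 := fun j => (ht j).2
  have openBox_eq_mu {s' : Fin (m + 1) → Bool} (h : s' i = !(s i)) :
      betaHi s t (some s') = muHi s' := betaHi_some_eq_muHi ht' hti h
  simp only [← Fin.insertNth_succ_cons]
  refine ⟨⟨betaLo_none_of_eq_one hti, betaHi_none_of_eq_one hti,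
    fun s' h => ⟨rfl, openBox_eq_mu h⟩, fun s' h => ⟨rfl, betaHi_some_of_eq t h⟩⟩,
    fun s'' => ⟨⟨?_, ?_⟩, ⟨?_, ?_⟩, ⟨?_, ?_⟩⟩⟩
  · exact psiV_slab_muLo (!(s i)) s''
  · exact (psiV_slab_muHi _ s'').trans (openBox_eq_mu (Fin.insertNth_apply_same i _ s'')).symm
  · exact psiV_slab_betaLo hti (some s'')
  · exact psiV_slab_betaHi hti (some s'')
  · exact psiV_slab_betaLo hti none
  · exact psiV_slab_betaHi hti none
end

section
/- Let n ≥ 1 and let S = {x ∈ ℝ^{n+1} : max_{0≤i≤n} |x_i| = 1} be the boundary of the cube [−1,1]^{n+1}. Define h : S → ℝ^{n+1} by h(x_0,x_1,…,x_n) = (x_0·(1 − max_{1≤i≤n} |x_i|), −x_1, …, −x_n). Then h is continuous, h(x) ≠ 0 for all x ∈ S, h(−x) = −h(x) for all x ∈ S, and h, viewed as a map S → ℝ^{n+1}∖{0}, is not homotopic to a constant map. -/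
/-- The boundary `S` of the cube `[-1,1]^{n+1}`: points with `max_{0 ≤ i ≤ n} |x_i| = 1`
(homeomorphic to the `n`-sphere). -/
def cubeBdry (m : ℕ) : Set (Fin (m+2) → ℝ) :=
  {x | Finset.fold max 0 (fun i => |x i|) Finset.univ = 1}

/-- The difference-of-centers map
`h(x₀, x₁, …, x_n) = (x₀ · (1 - max_{1 ≤ i ≤ n} |x_i|), -x₁, …, -x_n)` of the spherical
`n`-cycle `ℓ_n` (here `n = m + 1`, coordinates indexed by `Fin (m+2)`). -/
noncomputable def hMap (m : ℕ) (x : Fin (m+2) → ℝ) : Fin (m+2) → ℝ :=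
  Fin.cons
    (x 0 * (1 - Finset.fold max 0 (fun i : Fin (m+1) => |x i.succ|) Finset.univ))
    (fun i => -x i.succ)

/-!
The straight-line homotopy from the linear involution `(x₀, x') ↦ (x₀, -x')` to `h` never passes
through `0`, so it suffices that the inclusion of the unit sphere of `ℝⁿ⁺¹` into the space of
nonzero vectors is not nullhomotopic. A nullhomotopy would extend it to a map without zeros on the
closed ball, and smoothing and normalizing such a map would give a `C¹` retraction `r` of a ball
onto its boundary sphere.

There is no such `r`, by an argument of Milnor and Rogers. Put `φ = r - id`. For small `t` the
map `x ↦ x + t • φ x` is a bijection of the ball onto itself, so the integral of `det (1 + t • φ')`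
over the ball is its volume. This integral is a polynomial in `t`, so it is the volume for `t = 1`
too; but there `det r' = 0`, because the image of `r` has empty interior.
-/

open MeasureTheory Metric Polynomial Set Topology
open scoped NNReal

section Determinant

theorem exists_polynomial_eval_eq_det_one_add_smul {R M : Type*} [CommRing R] [Nontrivial R]
    [AddCommGroup M] [Module R M] [Module.Free R M] [Module.Finite R M] (f : Module.End R M) :
    ∃ p : R[X], p.natDegree ≤ Module.finrank R M ∧ ∀ t, p.eval t = LinearMap.det (1 + t • f) := by
  let b := Module.finBasis R M
  refine ⟨((X : R[X]) • (LinearMap.toMatrix b b f).map C +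
    (1 : Matrix _ _ R).map C).det, ?_, fun t ↦ ?_⟩
  · simpa using natDegree_det_X_add_C_le (LinearMap.toMatrix b b f) 1
  · rw [← LinearMap.det_toMatrix b, map_add, map_smul, LinearMap.toMatrix_one, add_comm]
    simp [eval_det, ← Matrix.smul_eq_mul_diagonal]

variable {E : Type*} [NormedAddCommGroup E] [NormedSpace ℝ E] [FiniteDimensional ℝ E]

theorem det_one_add_pos_of_norm_lt_one {A : E →L[ℝ] E} (hA : ‖A‖ < 1) : 0 < (1 + A).det := by
  have : CompleteSpace E := FiniteDimensional.complete ℝ E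
  have det_ne_zero : ∀ t ∈ Icc (0 : ℝ) 1, (1 + t • A).det ≠ 0 := fun t ht ↦ by
    have norm_lt : ‖-(t • A)‖ < 1 := by
      rw [norm_neg, norm_smul, Real.norm_of_nonneg ht.1]
      exact (mul_le_of_le_one_left (norm_nonneg A) ht.2).trans_lt hA
    have unit : IsUnit (1 + t • A) := by simpa using isUnit_one_sub_of_norm_lt_one norm_lt
    exact ((unit.map ContinuousLinearMap.toLinearMapRingHom).map LinearMap.det).ne_zero
  have continuous_det : Continuous fun t : ℝ ↦ (1 + t • A).det :=
    ContinuousLinearMap.continuous_det.comp (by fun_prop)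
  by_contra! hle
  obtain ⟨t, ht, hzero⟩ := intermediate_value_Icc' zero_le_one continuous_det.continuousOn
    (show (0 : ℝ) ∈ Icc _ _ by simpa [ContinuousLinearMap.det] using hle)
  exact det_ne_zero t ht hzero

theorem det_eq_zero_of_hasStrictFDerivAt {f : E → E} {f' : E →L[ℝ] E} {x : E} {s : Set E}
    (hf : HasStrictFDerivAt f f' x) (hs : interior s = ∅) (hfs : ∀ᶠ y in 𝓝 x, f y ∈ s) :
    f'.det = 0 := by
  have : CompleteSpace E := FiniteDimensional.complete ℝ E
  by_contra hdet
  have surj : f'.range = ⊤ :=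
    LinearMap.range_eq_top.2 ((Module.End.isUnit_iff _).1
      ((LinearMap.isUnit_iff_isUnit_det _).2 (isUnit_iff_ne_zero.2 hdet))).2
  have hnhds : s ∈ 𝓝 (f x) := hf.map_nhds_eq_of_surj surj ▸ hfs
  simpa [hs] using mem_interior_iff_mem_nhds.2 hnhds

end Determinant

theorem integral_eval_eq_of_forall_mem {α : Type*} [MeasurableSpace α] {μ : Measure α}
    {p : α → ℝ[X]} {n : ℕ} {c : ℝ} {T : Set ℝ} (hT : T.Infinite)
    (hdeg : ∀ x, (p x).natDegree ≤ n)
    (hint : ∀ t ∈ T, Integrable (fun x ↦ (p x).eval t) μ)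
    (hc : ∀ t ∈ T, ∫ x, (p x).eval t ∂μ = c) (t : ℝ) : ∫ x, (p x).eval t ∂μ = c := by
  obtain ⟨s, hsT, hcard⟩ := hT.exists_subset_card_eq (n + 1)
  have hinj : InjOn id (s : Set ℝ) := injOn_id _
  have hne : s.Nonempty := Finset.card_pos.1 (by lia)
  have interpolation (x : α) :
      (p x).eval t = ∑ i ∈ s, (p x).eval i * (Lagrange.basis s id i).eval t := by
    have hlt : (p x).degree < s.card :=
      degree_le_natDegree.trans_lt (by exact_mod_cast (hdeg x).trans_lt (by lia))
    conv_lhs => rw [Lagrange.eq_interpolate hinj hlt]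
    simp [Lagrange.interpolate_apply, eval_finsetSum]
  calc
    ∫ x, (p x).eval t ∂μ = ∑ i ∈ s, (∫ x, (p x).eval i ∂μ) * (Lagrange.basis s id i).eval t := by
      simp_rw [interpolation]
      rw [integral_finsetSum _ fun i hi ↦ (hint i (hsT hi)).mul_const _]
      simp_rw [integral_mul_const]
    _ = c * (∑ i ∈ s, Lagrange.basis s id i).eval t := by
      rw [eval_finsetSum, Finset.mul_sum]
      exact Finset.sum_congr rfl fun i hi ↦ by rw [hc i (hsT hi)]
    _ = c := by rw [Lagrange.sum_basis hinj hne, eval_one, mul_one]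

theorem bijective_add_of_lipschitzWith_lt_one {E : Type*} [NormedAddCommGroup E]
    [NormedSpace ℝ E] [CompleteSpace E] {φ : E → E} {K : ℝ≥0} (hφ : LipschitzWith K φ)
    (hK : K < 1) : Function.Bijective fun x ↦ x + φ x := by
  have happrox : ApproximatesLinearOn (fun x ↦ x + φ x)
      (ContinuousLinearEquiv.refl ℝ E : E →L[ℝ] E) univ K := by
    rw [ApproximatesLinearOn.approximatesLinearOn_iff_lipschitzOnWith, lipschitzOnWith_univ]
    convert hφ using 1
    ext x
    simp
  have hc : Subsingleton E ∨ K < ‖((ContinuousLinearEquiv.refl ℝ E).symm : E →L[ℝ] E)‖₊⁻¹ := by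
    rcases subsingleton_or_nontrivial E with hE | hE
    · exact .inl hE
    · right
      rwa [ContinuousLinearEquiv.refl_symm, ContinuousLinearEquiv.coe_refl,
        ContinuousLinearMap.nnnorm_id, inv_one]
  exact ⟨injOn_univ.1 (happrox.injOn hc), happrox.surjective hc⟩

theorem image_eq_of_bijective_of_eqOn_compl {α : Type*} {f : α → α} {s : Set α}
    (hf : Function.Bijective f) (hs : EqOn f id sᶜ) : f '' s = s := by
  rw [← compl_inj_iff, ← image_compl_eq hf, hs.image_eq, image_id]

theorem nonempty_inter_frontier_of_isPreconnected {X : Type*} [TopologicalSpace X] {s t : Set X}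
    (ht : IsPreconnected t) (hts : (t ∩ s).Nonempty) (htsc : (t ∩ sᶜ).Nonempty) :
    (t ∩ frontier s).Nonempty := by
  by_contra! hfr
  obtain ⟨x, hxt, hxs⟩ := hts
  obtain ⟨y, hyt, hys⟩ := htsc
  have hcover : t ⊆ interior s ∪ (closure s)ᶜ := fun z hz ↦ by
    by_contra! hzs
    simp only [mem_union, mem_compl_iff, not_or, not_not] at hzs
    exact (hfr.subset ⟨hz, hzs.2, hzs.1⟩ : z ∈ (∅ : Set X))
  obtain ⟨z, -, hzint, hzcl⟩ := ht _ _ isOpen_interior isClosed_closure.isOpen_compl hcover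
    ⟨x, hxt, (hcover hxt).resolve_right fun h ↦ h (subset_closure hxs)⟩
    ⟨y, hyt, (hcover hyt).resolve_left fun h ↦ hys (interior_subset h)⟩
  exact hzcl (subset_closure (interior_subset hzint))

theorem lipschitzWith_indicator_of_eqOn_frontier {E F : Type*} [NormedAddCommGroup E]
    [NormedSpace ℝ E] [PseudoMetricSpace F] [Zero F] {f : E → F} {s : Set E} {K : ℝ≥0}
    (hs : IsClosed s) (hf : LipschitzOnWith K f s) (hzero : EqOn f 0 (frontier s)) :
    LipschitzWith K (s.indicator f) := by
  have across {x y : E} (hx : x ∈ s) (hy : y ∉ s) : dist (f x) 0 ≤ K * dist x y := by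
    obtain ⟨z, hz, hzs⟩ := nonempty_inter_frontier_of_isPreconnected
      (convex_segment x y).isPreconnected ⟨x, left_mem_segment ℝ x y, hx⟩
      ⟨y, right_mem_segment ℝ x y, hy⟩
    calc
      dist (f x) 0 = dist (f x) (f z) := by rw [hzero hzs, Pi.zero_apply]
      _ ≤ K * dist x z := hf.dist_le_mul x hx z (hs.frontier_subset hzs)
      _ ≤ K * dist x y := by
        have := dist_add_dist_of_mem_segment hz
        gcongr
        linarith [dist_nonneg (x := z) (y := y)]
  refine LipschitzWith.of_dist_le_mul fun x y ↦ ?_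
  by_cases hx : x ∈ s <;> by_cases hy : y ∈ s
  · simpa [hx, hy] using hf.dist_le_mul x hx y hy
  · simpa [hx, hy] using across hx hy
  · simpa [hx, hy, dist_comm] using across hy hx
  · simpa [hx, hy] using mul_nonneg K.2 dist_nonneg

section Jacobian

variable {E : Type*} [NormedAddCommGroup E] [NormedSpace ℝ E] [FiniteDimensional ℝ E]

section ChangeOfVariables

variable [MeasurableSpace E] [BorelSpace E] {μ : Measure E} [μ.IsAddHaarMeasure]
  {φ : E → E} {φ' : E → E →L[ℝ] E} {s : Set E} {K : ℝ≥0}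

theorem setIntegral_det_one_add_of_lipschitzWith_lt_one (hs : MeasurableSet s) (hμs : μ s ≠ ⊤)
    (hφ : LipschitzWith K φ) (hK : K < 1) (hzero : EqOn φ 0 sᶜ)
    (hderiv : ∀ x ∈ s, HasFDerivAt φ (φ' x) x) :
    IntegrableOn (fun x ↦ (1 + φ' x).det) s μ ∧ ∫ x in s, (1 + φ' x).det ∂μ = μ.real s := by
  have : CompleteSpace E := FiniteDimensional.complete ℝ E
  have hbij := bijective_add_of_lipschitzWith_lt_one hφ hK
  have himage : (fun x ↦ x + φ x) '' s = s :=
    image_eq_of_bijective_of_eqOn_compl hbij fun x hx ↦ by simp [hzero hx]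
  have hderiv' (x) (hx : x ∈ s) : HasFDerivWithinAt (fun x ↦ x + φ x) (1 + φ' x) s x :=
    ((hasFDerivAt_id x).add (hderiv x hx)).hasFDerivWithinAt
  have habs : EqOn (fun x ↦ |(1 + φ' x).det| • (1 : ℝ)) (fun x ↦ (1 + φ' x).det) s :=
    fun x hx ↦ by
      have hnorm : ‖φ' x‖ < 1 := ((hderiv x hx).le_of_lipschitz hφ).trans_lt (mod_cast hK)
      simp [abs_of_pos (det_one_add_pos_of_norm_lt_one hnorm)]
  constructor
  · rw [← integrableOn_congr_fun habs hs, ← integrableOn_image_iff_integrableOn_abs_det_fderiv_smul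
      μ hs hderiv' hbij.injective.injOn fun _ ↦ 1, himage]
    exact integrableOn_const hμs
  · rw [← setIntegral_congr_fun hs habs, ← integral_image_eq_integral_abs_det_fderiv_smul
      μ hs hderiv' hbij.injective.injOn fun _ ↦ 1, himage]
    simp

theorem setIntegral_det_one_add_of_lipschitzWith (hs : MeasurableSet s) (hμs : μ s ≠ ⊤)
    (hφ : LipschitzWith K φ) (hzero : EqOn φ 0 sᶜ)
    (hderiv : ∀ x ∈ s, HasFDerivAt φ (φ' x) x) :
    ∫ x in s, (1 + φ' x).det ∂μ = μ.real s := by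
  choose p hdeg hp using fun x ↦ exists_polynomial_eval_eq_det_one_add_smul (φ' x : E →ₗ[ℝ] E)
  have eval_eq (x : E) (t : ℝ) : (p x).eval t = (1 + t • φ' x).det := hp x t
  let T : Set ℝ := {t | ‖t‖₊ * K < 1}
  have hT : T.Infinite := infinite_of_mem_nhds 0 <|
    (isOpen_lt (by fun_prop) continuous_const).mem_nhds (by simp)
  have small (t : ℝ) (ht : t ∈ T) :=
    setIntegral_det_one_add_of_lipschitzWith_lt_one (φ := fun x ↦ t • φ x) hs hμs
      ((lipschitzWith_smul t).comp hφ) ht (fun x hx ↦ by simp [hzero hx])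
      fun x hx ↦ (hderiv x hx).const_smul t
  simpa [eval_eq] using integral_eval_eq_of_forall_mem hT hdeg
    (fun t ht ↦ by simpa only [eval_eq, IntegrableOn] using (small t ht).1)
    (fun t ht ↦ by simpa only [eval_eq] using (small t ht).2) 1

end ChangeOfVariables

theorem not_contDiffOn_of_mapsTo_sphere {r : E → E} {c : E} {R : ℝ} (hR : 0 < R)
    (hmaps : MapsTo r (closedBall c R) (sphere c R)) (hfix : EqOn r id (sphere c R)) :
    ¬ContDiffOn ℝ 1 r (closedBall c R) := fun hr ↦ by
  borelize E
  let μ : Measure E := Measure.addHaar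
  obtain ⟨K, hK⟩ := (hr.sub contDiffOn_id).exists_lipschitzOnWith one_ne_zero
    (convex_closedBall c R) (isCompact_closedBall c R)
  let φ : E → E := (closedBall c R).indicator fun x ↦ r x - x
  have hlip : LipschitzWith K φ := lipschitzWith_indicator_of_eqOn_frontier isClosed_closedBall hK
    fun x hx ↦ by simp [hfix (frontier_closedBall_subset_sphere hx)]
  have hzero : EqOn φ 0 (ball c R)ᶜ := fun x hx ↦ by
    by_cases hxR : x ∈ closedBall c R
    · have hxs : x ∈ sphere c R := closedBall_sdiff_ball (x := c) ▸ ⟨hxR, hx⟩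
      simp [φ, hxR, hfix hxs]
    · simp [φ, hxR]
  have hstrict {x : E} (hx : x ∈ ball c R) : HasStrictFDerivAt r (fderiv ℝ r x) x :=
    (hr.contDiffAt (closedBall_mem_nhds_of_mem hx)).hasStrictFDerivAt one_ne_zero
  have hderiv (x) (hx : x ∈ ball c R) : HasFDerivAt φ (fderiv ℝ r x - 1) x :=
    ((hstrict hx).hasFDerivAt.sub (hasFDerivAt_id x)).congr_of_eventuallyEq <| by
      filter_upwards [closedBall_mem_nhds_of_mem hx] with y hy
      simp [φ, hy]
  have hdet (x) (hx : x ∈ ball c R) : (1 + (fderiv ℝ r x - 1)).det = 0 := by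
    rw [add_sub_cancel]
    exact det_eq_zero_of_hasStrictFDerivAt (hstrict hx) (interior_sphere c hR.ne')
      (Filter.mem_of_superset (closedBall_mem_nhds_of_mem hx) hmaps)
  have hvolume : (0 : ℝ) = μ.real (ball c R) := by
    rw [← setIntegral_det_one_add_of_lipschitzWith measurableSet_ball measure_ball_lt_top.ne hlip
      hzero hderiv, setIntegral_congr_fun measurableSet_ball hdet, integral_zero]
  exact (ENNReal.toReal_pos (measure_ball_pos μ c hR).ne' measure_ball_lt_top.ne).ne hvolume

end Jacobian

section Zeros

theorem exists_contDiff_ne_zero_of_continuous_ne_zero {E : Type*} [NormedAddCommGroup E]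
    [NormedSpace ℝ E] [FiniteDimensional ℝ E] {G : E → E} (hG : Continuous G)
    (hne : ∀ x, G x ≠ 0) (n : ℕ∞) :
    ∃ F : E → E, ContDiff ℝ n F ∧ (∀ x, F x ≠ 0) ∧ ∀ x, G x = x → F x = x := by
  -- Approximating `G - id` instead of `G` keeps the fixed points of `G` fixed.
  obtain ⟨g, hg, hclose, hsupp⟩ := (hG.sub continuous_id).exists_contDiff_approx n hG.norm
    fun x ↦ norm_pos_iff.2 (hne x)
  refine ⟨fun x ↦ x + g x, contDiff_id.add hg, fun x hx ↦ ?_, fun x hx ↦ ?_⟩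
  · have hdist : dist (g x) (G x - x) = ‖G x‖ := by
      rw [eq_neg_of_add_eq_zero_right hx, dist_eq_norm, neg_sub_left, norm_neg, sub_add_cancel]
    exact (hclose x).ne hdist
  · have hgx : g x = 0 := by
      by_contra h
      exact hsupp h (sub_eq_zero.2 hx)
    simp only [hgx, add_zero]

theorem exists_eq_zero_of_eventuallyEq_id_of_innerProductSpace {E : Type*} [NormedAddCommGroup E]
    [InnerProductSpace ℝ E] [FiniteDimensional ℝ E] {G : E → E} (hG : Continuous G)
    (hid : G =ᶠ[Filter.cocompact E] id) : ∃ x, G x = 0 := by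
  by_contra! hne
  obtain ⟨F, hF, hF0, hFid⟩ := exists_contDiff_ne_zero_of_continuous_ne_zero hG hne 1
  obtain ⟨R, hR, hGid⟩ : ∃ R > 0, ∀ x, ‖x‖ = R → G x = x := by
    rw [← Metric.cobounded_eq_cocompact] at hid
    obtain ⟨R, -, hR⟩ := Filter.hasBasis_cobounded_norm.eventually_iff.1 hid
    exact ⟨max R 1, by positivity, fun x hx ↦ hR ((le_max_left R 1).trans_eq hx.symm)⟩
  refine not_contDiffOn_of_mapsTo_sphere (r := fun x ↦ (R * ‖F x‖⁻¹) • F x) (c := 0) hR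
    (fun x _ ↦ ?_) (fun x hx ↦ ?_) (ContDiff.contDiffOn ?_)
  · have := norm_pos_iff.2 (hF0 x)
    rw [mem_sphere_zero_iff_norm, norm_smul, Real.norm_of_nonneg (by positivity)]
    field_simp
  · rw [mem_sphere_zero_iff_norm] at hx
    simp [hFid x (hGid x hx), hx, hR.ne']
  · exact (contDiff_const.mul ((hF.norm ℝ hF0).inv fun x ↦ norm_ne_zero_iff.2 (hF0 x))).smul hF

variable {E : Type*} [NormedAddCommGroup E] [NormedSpace ℝ E] [FiniteDimensional ℝ E]

theorem exists_eq_zero_of_eventuallyEq_id {G : E → E} (hG : Continuous G)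
    (hid : G =ᶠ[Filter.cocompact E] id) : ∃ x, G x = 0 := by
  let e : E ≃L[ℝ] EuclideanSpace ℝ (Fin (Module.finrank ℝ E)) := toEuclidean
  have hconj : (fun x ↦ e (G (e.symm x))) =ᶠ[Filter.cocompact _] id := by
    filter_upwards [e.symm.toHomeomorph.isClosedEmbedding.tendsto_cocompact.eventually hid]
      with x hx
    have : G (e.symm x) = e.symm x := hx
    simp [this]
  obtain ⟨x, hx⟩ := exists_eq_zero_of_eventuallyEq_id_of_innerProductSpace (by fun_prop) hconj
  exact ⟨e.symm x, by simpa using hx⟩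

theorem exists_mem_closedBall_eq_zero {g : E → E} {R : ℝ} (hR : 0 ≤ R)
    (hg : ContinuousOn g (closedBall 0 R)) (hid : EqOn g id (sphere 0 R)) :
    ∃ x ∈ closedBall 0 R, g x = 0 := by
  classical
  have hcont : Continuous ((closedBall (0 : E) R).piecewise g id) :=
    continuous_piecewise (fun x hx ↦ hid (frontier_closedBall_subset_sphere hx))
      (by rwa [isClosed_closedBall.closure_eq]) continuousOn_id
  have houtside : (closedBall (0 : E) R).piecewise g id =ᶠ[Filter.cocompact E] id :=
    Filter.mem_of_superset (isCompact_closedBall 0 R).compl_mem_cocompact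
      (piecewise_eqOn_compl _ _ _)
  obtain ⟨x, hx⟩ := exists_eq_zero_of_eventuallyEq_id hcont houtside
  by_cases hxR : x ∈ closedBall (0 : E) R
  · exact ⟨x, hxR, by simpa [hxR] using hx⟩
  · have hx0 : x = 0 := by simpa [hxR] using hx
    exact absurd (hx0 ▸ mem_closedBall_self hR) hxR

end Zeros

section PuncturedSpace

theorem exists_continuousMap_restrict_sphere_eq_of_nullhomotopic {E Y : Type*}
    [NormedAddCommGroup E] [NormedSpace ℝ E] [TopologicalSpace Y] {f : C(sphere (0 : E) 1, Y)}
    (hf : f.Nullhomotopic) : ∃ g : C(E, Y), g.restrict (sphere 0 1) = f := by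
  classical
  obtain ⟨y, ⟨H⟩⟩ := hf
  let time (x : E) : unitInterval := projIcc 0 1 zero_le_one (2 - 2 * ‖x‖)
  let direction (x : ({0}ᶜ : Set E)) : sphere (0 : E) 1 := (homeomorphUnitSphereProd E x).1
  let g (x : E) : Y := if hx : x = 0 then y else H (time x, direction ⟨x, hx⟩)
  have near_zero : g =ᶠ[𝓝 0] fun _ ↦ y := by
    filter_upwards [ball_mem_nhds (0 : E) one_half_pos] with x hx
    have htime : time x = 1 := projIcc_of_right_le _ (by linarith [mem_ball_zero_iff.1 hx])
    simp [g, htime]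
  have away_zero : ContinuousOn g {0}ᶜ := by
    rw [continuousOn_iff_continuous_domRestrict]
    have : Continuous fun x : ({0}ᶜ : Set E) ↦ H (time x, direction x) := by fun_prop
    exact this.congr fun x ↦ (dif_neg x.2 : g x = _).symm
  have hg : Continuous g := continuous_iff_continuousAt.2 fun x ↦ by
    rcases eq_or_ne x 0 with rfl | hx
    · exact continuousAt_const.congr near_zero.symm
    · exact away_zero.continuousAt (isOpen_compl_singleton.mem_nhds hx)
  refine ⟨⟨g, hg⟩, ContinuousMap.ext fun x ↦ ?_⟩
  have hx : (x : E) ≠ 0 := ne_zero_of_mem_unit_sphere x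
  have htime : time x = 0 := projIcc_of_le_left _ (by simp)
  have hdirection : direction ⟨x, hx⟩ = x := Subtype.ext <| by simp [direction]
  simp [g, hx, htime, hdirection]

theorem homotopic_of_zero_notMem_segment {X E : Type*} [TopologicalSpace X] [AddCommGroup E]
    [TopologicalSpace E] [IsTopologicalAddGroup E] [Module ℝ E] [ContinuousSMul ℝ E]
    {f g : C(X, {y : E | y ≠ 0})} (h : ∀ x, (0 : E) ∉ segment ℝ (f x : E) (g x)) :
    f.Homotopic g := by
  let H := ContinuousMap.Homotopy.affine
    ((ContinuousMap.mk Subtype.val).comp f) ((ContinuousMap.mk Subtype.val).comp g)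
  refine ⟨⟨⟨fun p ↦ ⟨H p, fun hp ↦ h p.2 ?_⟩, by fun_prop⟩, fun x ↦ ?_, fun x ↦ ?_⟩⟩
  · rw [segment_eq_image_lineMap]
    exact ⟨p.1, p.1.2, hp⟩
  · exact Subtype.ext (H.apply_zero x)
  · exact Subtype.ext (H.apply_one x)

variable {E : Type*} [NormedAddCommGroup E] [NormedSpace ℝ E]

/-- The inclusion of the unit sphere of a normed space into the space of its nonzero vectors. -/
def sphereInclusion (E : Type*) [NormedAddCommGroup E] [NormedSpace ℝ E] :
    C(sphere (0 : E) 1, {y : E | y ≠ 0}) :=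
  ⟨fun x ↦ ⟨x, ne_zero_of_mem_unit_sphere x⟩, by fun_prop⟩

/-- The self-map of the space of nonzero vectors induced by a linear automorphism. -/
def puncturedMap (L : E ≃L[ℝ] E) : C({y : E | y ≠ 0}, {y : E | y ≠ 0}) :=
  ⟨fun y ↦ ⟨L y, L.map_ne_zero_iff.2 y.2⟩, by fun_prop⟩

variable [FiniteDimensional ℝ E]

theorem not_nullhomotopic_sphereInclusion : ¬(sphereInclusion E).Nullhomotopic := fun hnull ↦ by
  obtain ⟨g, hg⟩ := exists_continuousMap_restrict_sphere_eq_of_nullhomotopic hnull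
  obtain ⟨x, -, hx⟩ := exists_mem_closedBall_eq_zero (g := fun x ↦ (g x : E)) zero_le_one
    (by fun_prop) fun x hx ↦ congrArg Subtype.val (DFunLike.congr_fun hg ⟨x, hx⟩)
  exact (g x).2 hx

theorem not_nullhomotopic_of_zero_notMem_segment (L : E ≃L[ℝ] E)
    {f : C(sphere (0 : E) 1, {y : E | y ≠ 0})}
    (hf : ∀ x : sphere (0 : E) 1, (0 : E) ∉ segment ℝ (L x) (f x)) : ¬f.Nullhomotopic := by
  rintro ⟨y, hy⟩
  have hL : ((puncturedMap L).comp (sphereInclusion E)).Homotopic f :=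
    homotopic_of_zero_notMem_segment hf
  have hinverse : (puncturedMap L.symm).comp ((puncturedMap L).comp (sphereInclusion E)) =
      sphereInclusion E := by
    ext x
    exact L.symm_apply_apply x
  have hnull : ((puncturedMap L).comp (sphereInclusion E)).Nullhomotopic := ⟨y, hL.trans hy⟩
  exact not_nullhomotopic_sphereInclusion (hinverse ▸ hnull.comp_right (puncturedMap L.symm))

end PuncturedSpace

section Cube

theorem fold_max_abs_eq_norm {ι : Type*} [Fintype ι] (x : ι → ℝ) :
    Finset.fold max 0 (fun i ↦ |x i|) Finset.univ = ‖x‖ := by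
  refine eq_of_forall_ge_iff fun c ↦ ?_
  rw [Finset.fold_max_le]
  constructor
  · rintro ⟨hc, hx⟩
    exact (pi_norm_le_iff_of_nonneg hc).2 fun i ↦ hx i (Finset.mem_univ i)
  · intro hx
    exact ⟨(norm_nonneg x).trans hx, fun i _ ↦ (norm_le_pi_norm x i).trans hx⟩

variable (m : ℕ)

theorem cubeBdry_eq_sphere : cubeBdry m = sphere 0 1 := by
  ext x
  rw [mem_sphere_zero_iff_norm, ← fold_max_abs_eq_norm]
  rfl

theorem hMap_eq_cons_norm (x : Fin (m + 2) → ℝ) :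
    hMap m x = Fin.cons (x 0 * (1 - ‖Fin.tail x‖)) (-Fin.tail x) := by
  rw [hMap, ← fold_max_abs_eq_norm]
  rfl

theorem continuous_hMap : Continuous (hMap m) := by
  simp only [funext (hMap_eq_cons_norm m), Fin.tail_def]
  fun_prop

theorem hMap_neg (x : Fin (m + 2) → ℝ) : hMap m (-x) = -hMap m x := by
  have htail : Fin.tail (-x) = -Fin.tail x := rfl
  ext i
  refine Fin.cases ?_ (fun j ↦ ?_) i <;> simp [hMap_eq_cons_norm, htail]

/-- The linear involution `(x₀, x₁, …, xₙ) ↦ (x₀, -x₁, …, -xₙ)`, to which `hMap` is joined by a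
straight-line homotopy of nowhere vanishing maps. -/
noncomputable def negTail : (Fin (m + 2) → ℝ) ≃L[ℝ] (Fin (m + 2) → ℝ) :=
  .piCongrRight (Fin.cons (.refl ℝ ℝ) fun _ ↦ .neg ℝ)

theorem negTail_apply (x : Fin (m + 2) → ℝ) : negTail m x = Fin.cons (x 0) (-Fin.tail x) := by
  ext i
  refine Fin.cases ?_ (fun j ↦ ?_) i <;> simp [negTail, Fin.tail]

theorem zero_notMem_segment_negTail_hMap {x : Fin (m + 2) → ℝ} (hx : x ≠ 0) :
    0 ∉ segment ℝ (negTail m x) (hMap m x) := by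
  rintro ⟨a, b, -, -, hab, hzero⟩
  rw [negTail_apply, hMap_eq_cons_norm] at hzero
  have htail : Fin.tail x = 0 := by
    ext j
    have hj := congrFun hzero j.succ
    simp only [Pi.add_apply, Pi.smul_apply, Fin.cons_succ, Pi.neg_apply, smul_eq_mul,
      Pi.zero_apply] at hj
    simp only [Pi.zero_apply]
    linear_combination -hj - Fin.tail x j * hab
  have hhead : x 0 = 0 := by
    have h0 := congrFun hzero 0
    simp only [htail, norm_zero, sub_zero, mul_one, Pi.add_apply, Pi.smul_apply, Fin.cons_zero,
      smul_eq_mul, Pi.zero_apply] at h0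
    linear_combination h0 - x 0 * hab
  refine hx (funext (Fin.cases hhead fun j ↦ congrFun htail j))

end Cube

/-- For `n ≥ 1` (here `n = m + 1`), the map `h` is continuous on the
boundary `S` of the cube `[-1,1]^{n+1}`, nowhere vanishing on `S`, odd (`h(-x) = -h(x)`), and,
viewed as a map `S → ℝ^{n+1} ∖ {0}`, is not homotopic to a constant map.  (This witnesses
that the homology class of `ℓ_n` generates `H_n(C_{n+1}(2))`.) -/
theorem stmt11 (m : ℕ) :
    ContinuousOn (hMap m) (cubeBdry m) ∧
    (∀ x ∈ cubeBdry m, hMap m x ≠ 0) ∧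
    (∀ x ∈ cubeBdry m, -x ∈ cubeBdry m ∧ hMap m (-x) = -hMap m x) ∧
    (∀ f : C(↥(cubeBdry m), ↥({y : Fin (m+2) → ℝ | y ≠ 0})),
      (∀ x : ↥(cubeBdry m), (f x : Fin (m+2) → ℝ) = hMap m x) →
      ∀ y : ↥({y : Fin (m+2) → ℝ | y ≠ 0}),
        ¬ f.Homotopic (ContinuousMap.const _ y)) := by
  have hseg {x : Fin (m + 2) → ℝ} (hx : x ∈ sphere 0 1) :
      0 ∉ segment ℝ (negTail m x) (hMap m x) :=
    zero_notMem_segment_negTail_hMap m (ne_zero_of_mem_unit_sphere ⟨x, hx⟩)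
  rw [cubeBdry_eq_sphere]
  refine ⟨(continuous_hMap m).continuousOn, fun x hx hzero ↦ ?_, fun x hx ↦ ⟨?_, hMap_neg m x⟩,
    fun f hf y hy ↦ ?_⟩
  · exact hseg hx (hzero ▸ right_mem_segment ℝ _ _)
  · simpa using hx
  · exact not_nullhomotopic_of_zero_notMem_segment (negTail m)
      (fun x ↦ hf x ▸ hseg x.2) ⟨y, hy⟩
end
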